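/- arXiv:1703.05946 — 2 statements merged into one kernel-verified Lean document; each statement's English description precedes it below -/
import Mathlib

section
/- If T : ℝ ⇒ ℝ belongs to the class 𝒯 and λ > 0, then the resolvent (I + λT)⁻¹ also belongs to 𝒯, where (I + λT)(x) := {x + λu : u ∈ T(x)} and S⁻¹(y) := {x ∈ ℝ : y ∈ S(x)}. -/
/-!
Let `T'` be the maximal monotone extension of `T`. By Minty's theorem its resolvent is
everywhere defined and single-valued, given by a nondecreasing 1-Lipschitz function `j`
(`exists_resolvent`); such a function is, as an operator, maximal monotone
(`maxMonotoneOp_singleton`). On the real line Minty's theorem is Helly's theorem for intervals: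
`x` is a resolvent point of `y` iff `x` lies between `a` and `y - lam * w` for every `(a, w)` in
the graph, and monotonicity makes these intervals pairwise intersecting
(`exists_resolvent_point`).

If `j y = j y' = x` with `y ≠ y'`, then `T' x` has at least two elements, so `x` is one of the
finitely many breakpoints of `T'` (`finite_nontrivial_values`). The new breakpoints are the
endpoints of the level sets of `j` at these finitely many values: on an interval free of such
endpoints, `j` is either constant or injective.
-/

noncomputable section


/-- Finite sets of breakpoints `-∞ = b₀ < b₁ < ⋯ < b_m = +∞`. -/
structure Breakpoints where
  m : ℕ
  hm : 0 < m
  pts : ℕ → EReal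
  bot : pts 0 = ⊥
  top : pts m = ⊤
  mono : ∀ i j : ℕ, i < j → j ≤ m → pts i < pts j

/-- The `i`-th open interval `(bᵢ, bᵢ₊₁)` determined by the breakpoints. -/
def Breakpoints.itv (B : Breakpoints) (i : ℕ) : Set ℝ :=
  {x : ℝ | B.pts i < (x : EReal) ∧ (x : EReal) < B.pts (i + 1)}

/-- Convexity for extended-real-valued functions on `ℝ`. -/
def ERealConvex (f : ℝ → EReal) : Prop :=
  ∀ x y a b : ℝ, 0 ≤ a → 0 ≤ b → a + b = 1 →
    f (a * x + b * y) ≤ (a : EReal) * f x + (b : EReal) * f y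

/-- The effective domain of an extended-real-valued function nowhere equal to `-∞`. -/
def effDom (f : ℝ → EReal) : Set ℝ := {x : ℝ | f x ≠ ⊤}

/-- `f` is (finite and) affine on `s`. -/
def IsAffineOn (f : ℝ → EReal) (s : Set ℝ) : Prop :=
  ∃ c d : ℝ, ∀ x ∈ s, f x = ((c * x + d : ℝ) : EReal)

/-- `f` is (finite,) strictly convex and differentiable on `s`. -/
def IsStrictConvexDiffOn (f : ℝ → EReal) (s : Set ℝ) : Prop :=
  ∃ g : ℝ → ℝ, (∀ x ∈ s, f x = (g x : EReal)) ∧ StrictConvexOn ℝ s g ∧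
    ∀ x ∈ s, DifferentiableAt ℝ g x

/-- Membership in the class `F(A)` for the breakpoint set `A = B`. -/
def MemFA (B : Breakpoints) (f : ℝ → EReal) : Prop :=
  (∀ x, f x ≠ ⊥) ∧ LowerSemicontinuous f ∧ ERealConvex f ∧
  ContinuousOn f (effDom f) ∧
  ∀ i : ℕ, i < B.m →
    IsAffineOn f (B.itv i) ∨ IsStrictConvexDiffOn f (B.itv i) ∨
      ∀ x ∈ B.itv i, f x = ⊤

/-- Membership in the class `F`. -/
def MemF (f : ℝ → EReal) : Prop := ∃ B : Breakpoints, MemFA B f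

/-- The convex subdifferential of `f : ℝ → (-∞,+∞]` (empty outside the effective domain). -/
def subdiff (f : ℝ → EReal) (x : ℝ) : Set ℝ :=
  {φ : ℝ | f x ≠ ⊤ ∧ ∀ y : ℝ, ((φ * (y - x) : ℝ) : EReal) + f x ≤ f y}

/-- `T` is a monotone operator. -/
def MonotoneOp (T : ℝ → Set ℝ) : Prop :=
  ∀ ⦃x u y v : ℝ⦄, u ∈ T x → v ∈ T y → 0 ≤ (u - v) * (x - y)

/-- `T` is a maximal monotone operator: its graph is not properly contained in the
graph of any monotone operator. -/
def MaxMonotoneOp (T : ℝ → Set ℝ) : Prop :=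
  MonotoneOp T ∧
    ∀ S : ℝ → Set ℝ, MonotoneOp S → (∀ x, T x ⊆ S x) → ∀ x, S x ⊆ T x

/-- `T` is single-valued and constant on `s`. -/
def SingleConstOn (T : ℝ → Set ℝ) (s : Set ℝ) : Prop :=
  ∃ c : ℝ, ∀ x ∈ s, T x = {c}

/-- `T` is single-valued, continuous and strictly monotone on `s`. -/
def SingleContStrictMonoOn (T : ℝ → Set ℝ) (s : Set ℝ) : Prop :=
  ∃ g : ℝ → ℝ, (∀ x ∈ s, T x = {g x}) ∧ ContinuousOn g s ∧ StrictMonoOn g s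

/-- `T` is identically equal to the empty set on `s`. -/
def EmptyOn (T : ℝ → Set ℝ) (s : Set ℝ) : Prop := ∀ x ∈ s, T x = ∅

/-- Membership in the class `𝒯(B)`. -/
def MemTB (B : Breakpoints) (T : ℝ → Set ℝ) : Prop :=
  ∃ T' : ℝ → Set ℝ, MaxMonotoneOp T' ∧ (∀ x, T x ⊆ T' x) ∧
    ∀ i : ℕ, i < B.m →
      SingleConstOn T' (B.itv i) ∨ SingleContStrictMonoOn T' (B.itv i) ∨
        EmptyOn T' (B.itv i)

/-- Membership in the class `𝒯`. -/
def MemT (T : ℝ → Set ℝ) : Prop := ∃ B : Breakpoints, MemTB B T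

/-- The inverse of a set-valued operator. -/
def invOp (T : ℝ → Set ℝ) : ℝ → Set ℝ := fun y => {x : ℝ | y ∈ T x}

/-- The pointwise (Minkowski) sum of two set-valued operators. -/
def addOp (S₁ S₂ : ℝ → Set ℝ) : ℝ → Set ℝ :=
  fun x => {w : ℝ | ∃ u ∈ S₁ x, ∃ v ∈ S₂ x, w = u + v}

/-- Any finite set of reals can be used as breakpoints: enumerated increasingly, its elements
bound open intervals that contain none of them. -/
lemma exists_breakpoints (D : Finset ℝ) :
    ∃ B : Breakpoints, ∀ i < B.m, ∀ d ∈ D, d ∉ B.itv i := by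
  set n := D.card with hn
  let e := D.orderEmbOfFin hn.symm
  let pts : ℕ → EReal := fun i =>
    if i = 0 then ⊥ else if h : i - 1 < n then ((e ⟨i - 1, h⟩ : ℝ) : EReal) else ⊤
  have hmono : ∀ i j : ℕ, i < j → j ≤ n + 1 → pts i < pts j := by
    intro i j hij hj
    have hj0 : j ≠ 0 := by omega
    by_cases hi0 : i = 0
    · by_cases hjn : j - 1 < n
      · simp only [pts, hi0, hj0, hjn, if_true, if_false, dif_pos]
        exact EReal.bot_lt_coe _
      · simp only [pts, hi0, hj0, hjn, if_true, if_false]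
        exact bot_lt_top
    · have hin : i - 1 < n := by omega
      by_cases hjn : j - 1 < n
      · simp only [pts, hi0, hj0, hin, hjn, if_false, dif_pos]
        have : (⟨i - 1, hin⟩ : Fin n) < ⟨j - 1, hjn⟩ := by
          rw [Fin.mk_lt_mk]; omega
        exact EReal.coe_lt_coe_iff.2 (e.strictMono this)
      · simp only [pts, hi0, hj0, hin, hjn, if_false, dif_pos]
        exact EReal.coe_lt_top _
  refine ⟨⟨n + 1, Nat.succ_pos _, pts, by simp [pts], by simp [pts], hmono⟩, ?_⟩
  rintro i hi d hd ⟨h1, h2⟩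
  have hd' : d ∈ Set.range e := by
    rw [Finset.range_orderEmbOfFin]; exact hd
  obtain ⟨k, rfl⟩ := hd'
  have hk : pts (k + 1) = ((e k : ℝ) : EReal) := by
    simp [pts]
  change pts i < _ at h1
  change _ < pts (i + 1) at h2
  rw [← hk] at h1 h2
  have hkn := k.2
  change i < n + 1 at hi
  rcases lt_trichotomy (i : ℕ) (k + 1) with h | h | h
  · rcases Nat.eq_or_lt_of_le (Nat.succ_le_of_lt h) with h' | h'
    · rw [← h'] at h2; exact lt_irrefl _ h2
    · exact lt_asymm h2 (hmono _ _ h' (by omega))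
  · rw [← h] at h1; exact lt_irrefl _ h1
  · exact lt_asymm h1 (hmono _ _ h (by omega))

lemma Breakpoints.mem_itv_or_eq (B : Breakpoints) (x : ℝ) :
    (∃ i ≤ B.m, B.pts i = x) ∨ ∃ i < B.m, x ∈ B.itv i := by
  classical
  have hex : ∃ i, (x : EReal) < B.pts i := ⟨B.m, by rw [B.top]; exact EReal.coe_lt_top x⟩
  have hle : Nat.find hex ≤ B.m := Nat.find_min' hex (by rw [B.top]; exact EReal.coe_lt_top x)
  have hspec := Nat.find_spec hex
  have h0 : Nat.find hex ≠ 0 := by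
    intro h
    rw [h, B.bot] at hspec
    exact not_lt_bot hspec
  obtain ⟨k, hk⟩ := Nat.exists_eq_succ_of_ne_zero h0
  rw [hk] at hspec hle
  have hk' : B.pts k ≤ x := not_lt.1 (Nat.find_min hex (by omega : k < Nat.find hex))
  rcases hk'.eq_or_lt with h | h
  · exact Or.inl ⟨k, by omega, h⟩
  · exact Or.inr ⟨k, by omega, h, hspec⟩

/-- An operator with the piecewise structure of `𝒯(B)` is multivalued only at breakpoints. -/
lemma finite_nontrivial_values (B : Breakpoints) (T : ℝ → Set ℝ)
    (hB : ∀ i : ℕ, i < B.m →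
      SingleConstOn T (B.itv i) ∨ SingleContStrictMonoOn T (B.itv i) ∨ EmptyOn T (B.itv i)) :
    {x : ℝ | (T x).Nontrivial}.Finite := by
  refine Set.Finite.subset
    ((Finset.range (B.m + 1)).image (fun i => (B.pts i).toReal)).finite_toSet ?_
  intro x hx
  rcases B.mem_itv_or_eq x with ⟨i, hi, h⟩ | ⟨i, hi, h⟩
  · simp only [Finset.coe_image, Set.mem_image, Finset.mem_coe, Finset.mem_range]
    exact ⟨i, by omega, by rw [h, EReal.toReal_coe]⟩
  · exfalso
    have hx : (T x).Nontrivial := hx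
    rcases hB i hi with ⟨c, hc⟩ | ⟨g, hg, -⟩ | he
    · rw [hc x h] at hx; exact Set.not_nontrivial_singleton hx
    · rw [hg x h] at hx; exact Set.not_nontrivial_singleton hx
    · rw [he x h] at hx; exact Set.not_nontrivial_empty hx

/-- A point monotonically related to the whole graph of a maximal monotone operator belongs to
that graph. -/
lemma MaxMonotoneOp.mem_of_related {T : ℝ → Set ℝ} (hT : MaxMonotoneOp T) {x u : ℝ}
    (h : ∀ a w, w ∈ T a → 0 ≤ (u - w) * (x - a)) : u ∈ T x := by
  refine hT.2 (fun z => {w | w ∈ T z ∨ (z = x ∧ w = u)}) ?_ (fun z w hw => Or.inl hw) x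
    (Or.inr ⟨rfl, rfl⟩)
  rintro a w b v (hw | ⟨rfl, rfl⟩) (hv | ⟨rfl, rfl⟩)
  · exact hT.1 hw hv
  · linarith [h a w hw]
  · exact h b v hv
  · simp

/-- Surjectivity of `I + lam • T` (Minty). -/
lemma exists_resolvent_point {T : ℝ → Set ℝ} (hT : MaxMonotoneOp T) {lam : ℝ} (hlam : 0 < lam)
    (y : ℝ) : ∃ x u, u ∈ T x ∧ x + lam * u = y := by
  -- The Helly-type step: `x` lies between `a` and `y - lam * w` for all `(a, w)` in the graph.
  obtain ⟨x, hx⟩ : ∃ x, ∀ a w, w ∈ T a → min a (y - lam * w) ≤ x ∧ x ≤ max a (y - lam * w) := by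
    have key : ∀ a w b v, w ∈ T a → v ∈ T b → min a (y - lam * w) ≤ max b (y - lam * v) := by
      intro a w b v hw hv
      rcases le_or_gt a b with h | h
      · exact (min_le_left _ _).trans (h.trans (le_max_left _ _))
      · have : v ≤ w := by
          by_contra hc
          nlinarith [hT.1 hw hv]
        exact (min_le_right _ _).trans (le_trans (by nlinarith) (le_max_right _ _))
    by_cases hne : ∃ a w, w ∈ T a
    · obtain ⟨a₀, w₀, h₀⟩ := hne
      let A : Set ℝ := {l | ∃ a w, w ∈ T a ∧ l = min a (y - lam * w)}
      have hub : ∀ b v, v ∈ T b → max b (y - lam * v) ∈ upperBounds A := by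
        rintro b v hv _ ⟨a, w, hw, rfl⟩
        exact key a w b v hw hv
      exact ⟨sSup A, fun a w hw => ⟨le_csSup ⟨_, hub a w hw⟩ ⟨a, w, hw, rfl⟩,
        csSup_le ⟨_, a₀, w₀, h₀, rfl⟩ (hub a w hw)⟩⟩
    · exact ⟨0, fun a w hw => (hne ⟨a, w, hw⟩).elim⟩
  refine ⟨x, (y - x) / lam, hT.mem_of_related ?_, by field_simp; ring⟩
  intro a w hw
  obtain ⟨h1, h2⟩ := hx a w hw
  have hprod : 0 ≤ (y - x - lam * w) * (x - a) := by
    rcases le_total a (y - lam * w) with h | h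
    · rw [min_eq_left h] at h1
      rw [max_eq_right h] at h2
      exact mul_nonneg (by linarith) (by linarith)
    · rw [min_eq_right h] at h1
      rw [max_eq_left h] at h2
      exact mul_nonneg_of_nonpos_of_nonpos (by linarith) (by linarith)
  have heq : ((y - x) / lam - w) * (x - a) = (y - x - lam * w) * (x - a) / lam := by
    field_simp
  rw [heq]
  exact div_nonneg hprod hlam.le

lemma resolvent_mono {T : ℝ → Set ℝ} (hT : MonotoneOp T) {lam : ℝ} (hlam : 0 < lam)
    {x u x' u' : ℝ} (hu : u ∈ T x) (hu' : u' ∈ T x') (h : x + lam * u ≤ x' + lam * u') :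
    x ≤ x' ∧ x' - x ≤ (x' + lam * u') - (x + lam * u) := by
  have hm := hT hu hu'
  have hle : x ≤ x' := by
    by_contra! hc
    have : u < u' := by nlinarith
    nlinarith
  refine ⟨hle, ?_⟩
  rcases hle.eq_or_lt with rfl | hlt
  · linarith
  · have : u ≤ u' := by
      by_contra! hc
      nlinarith
    nlinarith

/-- The resolvent of a maximal monotone operator is a nondecreasing, nonexpansive function. -/
lemma exists_resolvent {T : ℝ → Set ℝ} (hT : MaxMonotoneOp T) {lam : ℝ} (hlam : 0 < lam) :
    ∃ j : ℝ → ℝ, (∀ x u, u ∈ T x → j (x + lam * u) = x) ∧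
      (∀ y, ∃ u ∈ T (j y), j y + lam * u = y) ∧
      ∀ y y', y ≤ y' → j y ≤ j y' ∧ j y' - j y ≤ y' - y := by
  choose j u hu hj using fun y => exists_resolvent_point hT hlam y
  refine ⟨j, ?_, fun y => ⟨u y, hu y, hj y⟩, ?_⟩
  · intro x w hw
    exact le_antisymm (resolvent_mono hT.1 hlam (hu _) hw (hj _).le).1
      (resolvent_mono hT.1 hlam hw (hu _) (hj _).ge).1
  · intro y y' h
    have := resolvent_mono hT.1 hlam (hu y) (hu y') (by rw [hj, hj]; exact h)
    rwa [hj, hj] at this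

lemma maxMonotoneOp_singleton {j : ℝ → ℝ}
    (hj : ∀ y y', y ≤ y' → j y ≤ j y' ∧ j y' - j y ≤ y' - y) :
    MaxMonotoneOp (fun y => {j y}) := by
  constructor
  · rintro x u y v rfl rfl
    rcases le_total x y with h | h
    · exact mul_nonneg_of_nonpos_of_nonpos (by linarith [(hj _ _ h).1]) (by linarith)
    · exact mul_nonneg (by linarith [(hj _ _ h).1]) (by linarith)
  · intro S hS hsub y v hv
    have hmem : ∀ z, j z ∈ S z := fun z => hsub z rfl
    -- If `v ≠ j y`, moving `y` by half the gap towards `v` contradicts monotonicity of `S`,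
    -- because the value of `j` changes by at most half the gap.
    rcases lt_trichotomy v (j y) with h | h | h
    · have h1 := hS hv (hmem (y - (j y - v) / 2))
      have h2 := (hj (y - (j y - v) / 2) y (by linarith)).2
      nlinarith
    · exact h
    · have h1 := hS hv (hmem (y + (v - j y) / 2))
      have h2 := (hj y (y + (v - j y) / 2) (by linarith)).2
      nlinarith

/-- An interval meeting an interval `L` but containing neither endpoint of `L` lies in `L`. If `L`
is unbounded on one side, the junk value `0` of the corresponding `sInf` or `sSup` is excluded
too, which is harmless. -/
lemma subset_of_sInf_sSup_notMem {L I : Set ℝ} (hL : L.OrdConnected) (hI : I.OrdConnected)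
    (h1 : sInf L ∉ I) (h2 : sSup L ∉ I) {y : ℝ} (hy : y ∈ L) (hyI : y ∈ I) : I ⊆ L := by
  intro z hz
  by_contra hzL
  rcases le_total z y with h | h
  · have hlb : z ∈ lowerBounds L := by
      intro w hw
      by_contra! hc
      exact hzL (hL.out hw hy ⟨hc.le, h⟩)
    exact h1 (hI.out hz hyI ⟨le_csInf ⟨y, hy⟩ hlb, csInf_le ⟨z, hlb⟩ hy⟩)
  · have hub : z ∈ upperBounds L := by
      intro w hw
      by_contra! hc
      exact hzL (hL.out hy hw ⟨h, hc.le⟩)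
    exact h2 (hI.out hyI hz ⟨le_csSup ⟨z, hub⟩ hy, csSup_le ⟨y, hy⟩ hub⟩)

lemma Breakpoints.ordConnected_itv (B : Breakpoints) (i : ℕ) : (B.itv i).OrdConnected := by
  refine ⟨fun a ha b hb z hz => ⟨?_, ?_⟩⟩
  · exact ha.1.trans_le (EReal.coe_le_coe_iff.2 hz.1)
  · exact (EReal.coe_le_coe_iff.2 hz.2).trans_lt hb.2

/-- The class `𝒯` is closed under taking resolvents `(I + λT)⁻¹` for `λ > 0`. -/
theorem stmt6 (T : ℝ → Set ℝ) (hT : MemT T) (lam : ℝ) (hlam : 0 < lam) :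
    MemT (invOp (fun x => (fun u => x + lam * u) '' T x)) := by
  classical
  obtain ⟨B, T', hmax, hsub, hB⟩ := hT
  obtain ⟨j, hj1, hj2, hj3⟩ := exists_resolvent hmax hlam
  have hmono : Monotone j := fun y y' h => (hj3 y y' h).1
  have hcont : Continuous j := by
    refine (LipschitzWith.of_dist_le_mul (K := 1) fun y y' => ?_).continuous
    rw [NNReal.coe_one, one_mul, Real.dist_eq, Real.dist_eq]
    rcases le_total y y' with h | h
    · have := hj3 _ _ h
      rw [abs_of_nonpos (by linarith), abs_of_nonpos (by linarith)]
      linarith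
    · have := hj3 _ _ h
      rw [abs_of_nonneg (by linarith), abs_of_nonneg (by linarith)]
      linarith
  have hF := finite_nontrivial_values B T' hB
  let F := hF.toFinset
  obtain ⟨B', hB'⟩ := exists_breakpoints
    (F.image (fun x => sInf (j ⁻¹' {x})) ∪ F.image (fun x => sSup (j ⁻¹' {x})))
  refine ⟨B', fun y => {j y}, maxMonotoneOp_singleton hj3, ?_, ?_⟩
  · rintro y x ⟨u, hu, rfl⟩
    exact (hj1 x u (hsub x hu)).symm
  · intro i hi
    by_cases hinj : Set.InjOn j (B'.itv i)
    · exact Or.inr (Or.inl ⟨j, fun _ _ => rfl, hcont.continuousOn,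
        fun a ha b hb hab => (hmono hab.le).lt_of_ne fun h => hab.ne (hinj ha hb h)⟩)
    · left
      simp only [Set.InjOn, not_forall] at hinj
      obtain ⟨y, hy, y', hy', heq, hne⟩ := hinj
      have hmem : j y ∈ F := by
        obtain ⟨u, hu, huy⟩ := hj2 y
        obtain ⟨u', hu', huy'⟩ := hj2 y'
        rw [← heq] at hu' huy'
        rw [Set.Finite.mem_toFinset]
        exact ⟨u, hu, u', hu', fun h => hne (by rw [← huy, ← huy', h])⟩
      have hL : (j ⁻¹' {j y}).OrdConnected :=
        Set.ordConnected_singleton.preimage_mono hmono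
      refine ⟨j y, fun z hz => ?_⟩
      have hz' : z ∈ j ⁻¹' {j y} := subset_of_sInf_sSup_notMem hL (B'.ordConnected_itv i)
        (fun h => hB' i hi _ (Finset.mem_union_left _ (Finset.mem_image_of_mem _ hmem)) h)
        (fun h => hB' i hi _ (Finset.mem_union_right _ (Finset.mem_image_of_mem _ hmem)) h)
        (rfl : j y = j y) hy hz
      exact congrArg _ hz'
end
end

section
/- If f : ℝ → (-∞,+∞] is a proper function belonging to the class F, then its subdifferential map ∂f : ℝ ⇒ ℝ is maximal monotone and belongs to the class 𝒯. -/
/-!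
Maximality of `∂f` is Minty's argument. A convex, lower semicontinuous, proper `f` on `ℝ` decreases
at most linearly (`exists_linear_lower_bound`), so `f + (· - c)² / 2` has a minimizer `z` for every
`c` (`exists_prox`), and then `c - z ∈ ∂f(z)` (`prox_mem_subdiff`). If `(x, u)` is monotonically
related to the graph of `∂f`, the choice `c = x + u` forces `z = x`, hence `u ∈ ∂f(x)`.

For membership in `𝒯`, `∂f` is its own maximal monotone extension and the breakpoints of `f` serve
unchanged. On an open interval where `f` is affine or differentiable, `∂f` is the singleton of the
derivative (`subdiff_eq_singleton`); the derivative of a strictly convex differentiable function is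
strictly increasing, and therefore continuous by Darboux's theorem.
-/

noncomputable section


/-! ### Convexity in real terms and a lower bound -/

lemma exists_real_of_ne {f : ℝ → EReal} (hbot : ∀ x, f x ≠ ⊥) {x : ℝ} (hx : f x ≠ ⊤) :
    ∃ r : ℝ, f x = (r : EReal) :=
  ⟨(f x).toReal, (EReal.coe_toReal hx (hbot x)).symm⟩

lemma ERealConvex.le_coe {f : ℝ → EReal} (hc : ERealConvex f) {x y p q : ℝ}
    (hx : f x = (p : EReal)) (hy : f y = (q : EReal)) {t : ℝ} (h0 : 0 ≤ t) (h1 : t ≤ 1) :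
    f (x + t * (y - x)) ≤ ((p + t * (q - p) : ℝ) : EReal) := by
  have h := hc x y (1 - t) t (by linarith) h0 (by ring)
  rw [hx, hy, ← EReal.coe_mul, ← EReal.coe_mul, ← EReal.coe_add] at h
  convert h using 2 <;> ring

/-- A convex lower semicontinuous function decreases at most linearly away from a point `p` of its
domain: it is bounded below on `[p - 1, p + 1]` by compactness, and convexity on the segment from
`p` to a far point `y` carries this bound, scaled by `|y - p|`, to `y`. -/
lemma exists_linear_lower_bound {f : ℝ → EReal} (hbot : ∀ x, f x ≠ ⊥)
    (hl : LowerSemicontinuous f) (hc : ERealConvex f) {p P : ℝ} (hp : f p = (P : EReal)) :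
    ∃ M K : ℝ, 0 ≤ K ∧ ∀ y, ((-M - K * |y - p| : ℝ) : EReal) ≤ f y := by
  obtain ⟨z, -, hzmin⟩ := LowerSemicontinuousOn.exists_isMinOn
    (s := Set.Icc (p - 1) (p + 1)) ⟨p, by constructor <;> linarith⟩ isCompact_Icc
    (hl.lowerSemicontinuousOn _)
  rw [isMinOn_iff] at hzmin
  have hzp : f z ≤ P := hp ▸ hzmin p (by constructor <;> linarith)
  obtain ⟨m, hm⟩ := exists_real_of_ne hbot (ne_top_of_le_ne_top (EReal.coe_ne_top P) hzp)
  rw [hm] at hzmin hzp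
  have hmP : m ≤ P := by exact_mod_cast hzp
  refine ⟨-m, P - m, by linarith, fun y => ?_⟩
  by_cases hy : |y - p| ≤ 1
  · refine le_trans ?_ (hzmin y ?_)
    · have := mul_nonneg (sub_nonneg.2 hmP) (abs_nonneg (y - p))
      exact_mod_cast (by linarith)
    · rw [abs_le] at hy
      constructor <;> linarith
  · push Not at hy
    by_cases htop : f y = ⊤
    · rw [htop]; exact le_top
    obtain ⟨Y, hY⟩ := exists_real_of_ne hbot htop
    have hpos : 0 < |y - p| := by linarith
    have hconv := hc.le_coe hp hY (t := |y - p|⁻¹) (by positivity) (inv_le_one_of_one_le₀ hy.le)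
    have habs : |(|y - p|⁻¹ * (y - p))| ≤ 1 := by
      rw [abs_mul, abs_inv, abs_abs, inv_mul_cancel₀ hpos.ne']
    rw [abs_le] at habs
    have hmin := (hzmin (p + |y - p|⁻¹ * (y - p)) (by constructor <;> linarith)).trans hconv
    have hmin' : m ≤ P + |y - p|⁻¹ * (Y - P) := by exact_mod_cast hmin
    have hscaled : |y - p| * (m - P) ≤ Y - P := by
      calc |y - p| * (m - P) ≤ |y - p| * (|y - p|⁻¹ * (Y - P)) := by gcongr; linarith
        _ = Y - P := by field_simp
    rw [hY]
    exact_mod_cast (by linarith)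

/-! ### Maximal monotonicity -/

/-- The proximal point: `f + (· - c)² / 2` is lower semicontinuous and coercive, hence attains its
minimum over `ℝ`, at a point of the domain. -/
lemma exists_prox {f : ℝ → EReal} (hbot : ∀ x, f x ≠ ⊥) (hl : LowerSemicontinuous f)
    (hc : ERealConvex f) (hproper : ∃ x, f x ≠ ⊤) (c : ℝ) :
    ∃ z : ℝ, f z ≠ ⊤ ∧ ∀ y : ℝ,
      f z + (((z - c) ^ 2 / 2 : ℝ) : EReal) ≤ f y + (((y - c) ^ 2 / 2 : ℝ) : EReal) := by
  obtain ⟨p, hp⟩ := hproper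
  obtain ⟨P, hP⟩ := exists_real_of_ne hbot hp
  obtain ⟨M, K, hK, hlow⟩ := exists_linear_lower_bound hbot hl hc hP
  set Q : ℝ := |M + P| + |p - c| ^ 2 with hQ
  -- Outside the ball of radius `R` around `p` the objective exceeds its value at `p`.
  set R : ℝ := 2 * (K + |p - c| + 1 + Q) with hR
  have hQ0 : 0 ≤ Q := by positivity
  have hR0 : 0 ≤ R := by positivity
  have hlsc : LowerSemicontinuous fun y => f y + (((y - c) ^ 2 / 2 : ℝ) : EReal) := by
    refine hl.add' (Continuous.lowerSemicontinuous ?_) fun x => ?_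
    · exact continuous_coe_real_ereal.comp (by fun_prop)
    · by_cases hx : f x = ⊤
      · rw [hx]; exact EReal.continuousAt_add_top_coe _
      · obtain ⟨r, hr⟩ := exists_real_of_ne hbot hx
        rw [hr]; exact EReal.continuousAt_add_coe_coe _ _
  obtain ⟨z, -, hz⟩ := LowerSemicontinuousOn.exists_isMinOn
    (s := Set.Icc (p - R) (p + R)) ⟨p, by constructor <;> linarith⟩ isCompact_Icc
    (hlsc.lowerSemicontinuousOn _)
  rw [isMinOn_iff] at hz
  have hzp := hz p (by constructor <;> linarith)
  refine ⟨z, fun htop => ?_, fun y => ?_⟩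
  · rw [htop, hP, EReal.top_add_coe, ← EReal.coe_add] at hzp
    exact EReal.coe_ne_top _ (top_le_iff.1 hzp)
  by_cases hy : |y - p| ≤ R
  · rw [abs_le] at hy
    exact hz y (by constructor <;> linarith)
  push Not at hy
  refine hzp.trans ?_
  by_cases htop : f y = ⊤
  · rw [htop, EReal.top_add_coe]; exact le_top
  obtain ⟨Y, hY⟩ := exists_real_of_ne hbot htop
  have hYlow := hlow y
  rw [hY] at hYlow
  have hYlow' : -M - K * |y - p| ≤ Y := by exact_mod_cast hYlow
  rw [hY, hP]
  have key : P + (p - c) ^ 2 / 2 ≤ Y + (y - c) ^ 2 / 2 := by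
    have h1 : (y - c) ^ 2 = |y - p| ^ 2 + 2 * ((y - p) * (p - c)) + (p - c) ^ 2 := by
      rw [sq_abs]; ring
    have h2 : -(|y - p| * |p - c|) ≤ (y - p) * (p - c) := by
      rw [← abs_mul]; exact neg_abs_le _
    have h3 : 1 + Q ≤ |y - p| / 2 - (K + |p - c|) := by linarith
    have h4 : |y - p| * (1 + Q) ≤ |y - p| * (|y - p| / 2 - (K + |p - c|)) := by gcongr
    have h5 : 1 ≤ |y - p| := by linarith [abs_nonneg (p - c)]
    have h6 : 1 * (1 + Q) ≤ |y - p| * (1 + Q) := by gcongr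
    have h7 : M + P ≤ |M + P| := le_abs_self _
    have h8 : 0 ≤ |p - c| ^ 2 := by positivity
    nlinarith
  exact_mod_cast key

lemma le_of_forall_small {a b d : ℝ} (h : ∀ t : ℝ, 0 < t → t ≤ 1 → a ≤ b + t * d) : a ≤ b := by
  have ht : Filter.Tendsto (fun t : ℝ => b + t * d) (nhdsWithin 0 (Set.Ioi 0)) (nhds b) := by
    have : ContinuousAt (fun t : ℝ => b + t * d) 0 := by fun_prop
    simpa [ContinuousAt] using this.tendsto.mono_left nhdsWithin_le_nhds
  refine ge_of_tendsto ht ?_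
  filter_upwards [Ioc_mem_nhdsGT (zero_lt_one' ℝ)] with t ht using h t ht.1 ht.2

/-- First-order optimality of the proximal point `z`: the residual `c - z` is a subgradient. -/
lemma prox_mem_subdiff {f : ℝ → EReal} (hbot : ∀ x, f x ≠ ⊥) (hc : ERealConvex f) {c z : ℝ}
    (hz : f z ≠ ⊤) (hmin : ∀ y : ℝ,
      f z + (((z - c) ^ 2 / 2 : ℝ) : EReal) ≤ f y + (((y - c) ^ 2 / 2 : ℝ) : EReal)) :
    c - z ∈ subdiff f z := by
  refine ⟨hz, fun y => ?_⟩
  by_cases htop : f y = ⊤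
  · rw [htop]; exact le_top
  obtain ⟨Y, hY⟩ := exists_real_of_ne hbot htop
  obtain ⟨Z, hZ⟩ := exists_real_of_ne hbot hz
  rw [hY, hZ]
  have key : (c - z) * (y - z) + Z ≤ Y := by
    refine le_of_forall_small (d := (y - z) ^ 2 / 2) fun t ht0 ht1 => ?_
    have h1 := (hmin (z + t * (y - z))).trans
      (add_le_add_left (hc.le_coe hZ hY ht0.le ht1) _)
    rw [hZ] at h1
    have h2 : Z + (z - c) ^ 2 / 2 ≤ Z + t * (Y - Z) + (z + t * (y - z) - c) ^ 2 / 2 := by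
      exact_mod_cast h1
    refine le_of_mul_le_mul_left ?_ ht0
    nlinarith
  exact_mod_cast key

lemma subdiff_monotone {f : ℝ → EReal} (hbot : ∀ x, f x ≠ ⊥) : MonotoneOp (subdiff f) := by
  rintro x u y v ⟨hx, hu⟩ ⟨hy, hv⟩
  obtain ⟨X, hX⟩ := exists_real_of_ne hbot hx
  obtain ⟨Y, hY⟩ := exists_real_of_ne hbot hy
  have h1 := hu y
  have h2 := hv x
  rw [hX, hY] at h1 h2
  have h1' : u * (y - x) + X ≤ Y := by exact_mod_cast h1
  have h2' : v * (x - y) + Y ≤ X := by exact_mod_cast h2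
  nlinarith

/-- If `u` extends the graph at `x`, take the proximal point `z` for `c = x + u`: the subgradient
`x + u - z` at `z` gives `0 ≤ (u - (x + u - z)) (x - z) = -(x - z)²`, so `z = x`. -/
lemma subdiff_maxMonotone {f : ℝ → EReal} (hbot : ∀ x, f x ≠ ⊥) (hl : LowerSemicontinuous f)
    (hc : ERealConvex f) (hproper : ∃ x, f x ≠ ⊤) : MaxMonotoneOp (subdiff f) := by
  refine ⟨subdiff_monotone hbot, fun S hS hsub x u hu => ?_⟩
  obtain ⟨z, hz, hmin⟩ := exists_prox hbot hl hc hproper (x + u)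
  have hmem := prox_mem_subdiff hbot hc hz hmin
  have hmono := hS hu (hsub z hmem)
  have hzx : z = x := by
    have : (z - x) ^ 2 ≤ 0 := by nlinarith
    have := pow_eq_zero_iff (two_ne_zero) |>.1 (le_antisymm this (sq_nonneg _))
    linarith
  subst hzx
  simpa using hmem

/-! ### The subdifferential on the intervals -/

/-- Where a convex `f` agrees near `x` with a real function differentiable at `x`, the derivative
is the only subgradient. -/
lemma subdiff_eq_singleton {f : ℝ → EReal} (hbot : ∀ x, f x ≠ ⊥) (hc : ERealConvex f)
    {g : ℝ → ℝ} {x g' : ℝ} (hfg : ∀ᶠ y in nhds x, f y = (g y : EReal))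
    (hg : HasDerivAt g g' x) : subdiff f x = {g'} := by
  have hx : f x = (g x : EReal) := hfg.self_of_nhds
  ext φ
  rw [Set.mem_singleton_iff]
  constructor
  · rintro ⟨-, hφ⟩
    have hmin : IsLocalMin (fun y => g y - φ * y) x := by
      filter_upwards [hfg] with y hy
      have h := hφ y
      rw [hx, hy] at h
      have h' : φ * (y - x) + g x ≤ g y := by exact_mod_cast h
      linarith
    have hd : HasDerivAt (fun y => g y - φ * y) (g' - φ) x := by
      simpa using hg.fun_sub ((hasDerivAt_id x).const_mul φ)
    linarith [hmin.hasDerivAt_eq_zero hd]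
  · rintro rfl
    refine ⟨by rw [hx]; exact EReal.coe_ne_top _, fun y => ?_⟩
    by_cases htop : f y = ⊤
    · rw [htop]; exact le_top
    obtain ⟨Y, hY⟩ := exists_real_of_ne hbot htop
    -- The difference quotients of `g` along the segment from `x` to `y` are at most `Y - g x`.
    have hline : HasDerivAt (fun t : ℝ => x + t * (y - x)) (y - x) 0 := by
      simpa using ((hasDerivAt_id (0 : ℝ)).mul_const (y - x)).const_add x
    have hcomp : HasDerivAt (fun t : ℝ => g (x + t * (y - x))) (φ * (y - x)) 0 := by
      refine HasDerivAt.comp (h₂ := g) 0 ?_ hline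
      simpa using hg
    have hlim := hcomp.tendsto_slope_zero_right
    have hev : ∀ᶠ t in nhds (0 : ℝ), f (x + t * (y - x)) = (g (x + t * (y - x)) : EReal) := by
      have hcont : Filter.Tendsto (fun t : ℝ => x + t * (y - x)) (nhds 0) (nhds x) := by
        simpa using hline.continuousAt.tendsto
      exact hcont.eventually hfg
    have hle : φ * (y - x) ≤ Y - g x := by
      refine le_of_tendsto hlim ?_
      filter_upwards [Ioc_mem_nhdsGT (zero_lt_one' ℝ), nhdsWithin_le_nhds hev] with t ht hft
      have h := hc.le_coe hx hY ht.1.le ht.2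
      rw [hft] at h
      have h' : g (x + t * (y - x)) ≤ g x + t * (Y - g x) := by exact_mod_cast h
      simp only [zero_add, zero_mul, add_zero, smul_eq_mul]
      rw [inv_mul_le_iff₀ ht.1]
      linarith
    rw [hx, hY]
    exact_mod_cast (by linarith)

lemma Breakpoints.isOpen_itv (B : Breakpoints) (i : ℕ) : IsOpen (B.itv i) :=
  (isOpen_lt continuous_const continuous_coe_real_ereal).inter
    (isOpen_lt continuous_coe_real_ereal continuous_const)

/-- By Darboux's theorem the image of the derivative has no gaps, and a strictly monotone function
without gaps in its image is continuous. -/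
lemma continuousOn_deriv_of_strictConvexOn {s : Set ℝ} (hs : IsOpen s) {g : ℝ → ℝ}
    (hg : StrictConvexOn ℝ s g) (hd : ∀ x ∈ s, DifferentiableAt ℝ g x) :
    ContinuousOn (deriv g) s := by
  have hmono := hg.strictMonoOn_deriv hd
  have hord : (deriv g '' s).OrdConnected := hg.1.ordConnected.image_deriv hd
  intro x hx
  refine (hmono.continuousAt_of_image_mem_nhds (hs.mem_nhds hx) ?_).continuousWithinAt
  obtain ⟨l, u, hxlu, hsub⟩ := mem_nhds_iff_exists_Ioo_subset.1 (hs.mem_nhds hx)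
  obtain ⟨a, ha⟩ := exists_between hxlu.1
  obtain ⟨b, hb⟩ := exists_between hxlu.2
  have has : a ∈ s := hsub ⟨ha.1, ha.2.trans hxlu.2⟩
  have hbs : b ∈ s := hsub ⟨hxlu.1.trans hb.1, hb.2⟩
  exact Filter.mem_of_superset (Icc_mem_nhds (hmono has hx ha.2) (hmono hx hbs hb.1))
    (hord.out (Set.mem_image_of_mem _ has) (Set.mem_image_of_mem _ hbs))

/-- If `f ∈ F` is proper then `∂f` is maximal monotone and belongs to `𝒯`. -/
theorem stmt8 (f : ℝ → EReal) (hf : MemF f) (hproper : ∃ x : ℝ, f x ≠ ⊤) :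
    MaxMonotoneOp (subdiff f) ∧ MemT (subdiff f) := by
  obtain ⟨B, hbot, hl, hc, -, hB⟩ := hf
  have hmax := subdiff_maxMonotone hbot hl hc hproper
  refine ⟨hmax, B, subdiff f, hmax, fun x => subset_rfl, fun i hi => ?_⟩
  have hopen := B.isOpen_itv i
  rcases hB i hi with ⟨c, d, haff⟩ | ⟨g, hfg, hg, hd⟩ | htop
  · refine Or.inl ⟨c, fun x hx => subdiff_eq_singleton (g := fun x => c * x + d) hbot hc ?_ ?_⟩
    · filter_upwards [hopen.mem_nhds hx] with y hy using haff y hy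
    · simpa using ((hasDerivAt_id x).const_mul c).add_const d
  · refine Or.inr (Or.inl ⟨deriv g, fun x hx => subdiff_eq_singleton (g := g) hbot hc ?_
      (hd x hx).hasDerivAt, continuousOn_deriv_of_strictConvexOn hopen hg hd,
      hg.strictMonoOn_deriv hd⟩)
    filter_upwards [hopen.mem_nhds hx] with y hy using hfg y hy
  · exact Or.inr (Or.inr fun x hx => Set.eq_empty_of_forall_notMem fun φ hφ => hφ.1 (htop x hx))
end
end
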